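/- arXiv:math/9810018 — 2 statements merged into one kernel-verified Lean document; each statement's English description precedes it below -/
import Mathlib

section
/- For all integers L ≥ 0 and all integers a, T_1(L,a) = ∑_{k=0}^{L} (−1)^{L−k} q^{binom(L−k,2)+binom(a,2)−binom(L,2)} · (1+q^a)/(1+q^k) · [L choose k]_q · [2k choose k−a]_q. -/
open Finset

/-- The variable `q`, realized as the generator of the field of rational functions over `ℚ`. -/
noncomputable def qq : RatFunc ℚ := RatFunc.X

/-- `(x)_n = ∏_{j=1}^n (1 - x^j)`. -/
noncomputable def qPoch (x : RatFunc ℚ) (n : ℕ) : RatFunc ℚ :=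
  ∏ j ∈ Finset.range n, (1 - x ^ (j + 1))

/-- Gaussian binomial coefficient `[n choose k]_x`, zero unless `0 ≤ k ≤ n`. -/
noncomputable def qBin (x : RatFunc ℚ) (n k : ℤ) : RatFunc ℚ :=
  if 0 ≤ k ∧ k ≤ n then qPoch x n.toNat / (qPoch x k.toNat * qPoch x (n - k).toNat) else 0

/-- The `q`-trinomial coefficient `[L, b; a]_2` in base `x`. -/
noncomputable def qTri (x : RatFunc ℚ) (L : ℕ) (b a : ℤ) : RatFunc ℚ :=
  ∑ k ∈ Finset.range (L + 1),
    x ^ ((k : ℤ) * (k + b)) * qBin x (L : ℤ) (k : ℤ) * qBin x ((L : ℤ) - k) ((k : ℤ) + a)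

/-- The `q`-trinomial `T_n(L, a)`, written in terms of `s = q^{1/2}` (so the base is `s^2`):
`T_n(L,a) = ∑ s^{r(r-n)} (s²)_L / ((s²)_{(L-a-r)/2} (s²)_{(L+a-r)/2} (s²)_r)`,
the sum over `r ≥ 0` with `L - a - r` even and `r ≤ L - |a|`; zero for `|a| > L`. -/
noncomputable def qT (s : RatFunc ℚ) (n : ℤ) (L : ℕ) (a : ℤ) : RatFunc ℚ :=
  ∑ r ∈ Finset.range (L + 1),
    if Even ((L : ℤ) - a - r) ∧ (r : ℤ) ≤ (L : ℤ) - |a| then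
      s ^ ((r : ℤ) * ((r : ℤ) - n)) * qPoch (s ^ 2) L /
        (qPoch (s ^ 2) (((L : ℤ) - a - r) / 2).toNat *
          qPoch (s ^ 2) (((L : ℤ) + a - r) / 2).toNat * qPoch (s ^ 2) r)
    else 0

/-- The Cartan matrix of the Lie algebra `A_n`. -/
def cartanA (n : ℕ) (i j : Fin n) : ℤ :=
  if i = j then 2 else if |(i : ℤ) - (j : ℤ)| = 1 then -1 else 0


lemma qq_ne : qq ≠ 0 := RatFunc.X_ne_zero

lemma qq_pow_ne (n : ℕ) (hn : n ≠ 0) : qq ^ n ≠ 1 := by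
  intro h
  have h2 : algebraMap (Polynomial ℚ) (RatFunc ℚ) (Polynomial.X ^ n)
      = algebraMap (Polynomial ℚ) (RatFunc ℚ) 1 := by
    rw [map_pow, RatFunc.algebraMap_X, map_one]; exact h
  have h3 := RatFunc.algebraMap_injective ℚ h2
  have h4 := congrArg Polynomial.natDegree h3
  simp at h4
  exact hn h4

/-- base -/
noncomputable def QQ : RatFunc ℚ := qq ^ 2

lemma QQ_ne : QQ ≠ 0 := pow_ne_zero _ qq_ne

lemma QQ_pow_ne (n : ℕ) (hn : n ≠ 0) : QQ ^ n ≠ 1 := by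
  unfold QQ; rw [← pow_mul]; exact qq_pow_ne _ (by omega)

lemma one_add_QQ (k : ℕ) : 1 + QQ ^ k ≠ 0 := by
  intro h
  rcases Nat.eq_zero_or_pos k with rfl | hk
  · norm_num at h
  · apply QQ_pow_ne (k * 2) (by omega)
    rw [pow_mul]
    have : QQ ^ k = -1 := by linear_combination h
    rw [this]; norm_num

lemma poch_ne (n : ℕ) : qPoch QQ n ≠ 0 := by
  unfold qPoch
  rw [Finset.prod_ne_zero_iff]
  intro j _ h
  exact QQ_pow_ne (j+1) (by omega) (by linear_combination -h)

lemma poch_succ (n : ℕ) : qPoch QQ (n+1) = qPoch QQ n * (1 - QQ ^ (n+1)) := by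
  unfold qPoch; rw [Finset.prod_range_succ]

/-- inverse Pochhammer on integers -/
noncomputable def ip (n : ℤ) : RatFunc ℚ := if n < 0 then 0 else (qPoch QQ n.toNat)⁻¹

lemma ip_neg {n : ℤ} (h : n < 0) : ip n = 0 := by simp [ip, h]
lemma ip_zero : ip 0 = 1 := by simp [ip, qPoch]

lemma ip_rec (n : ℤ) : ip (n - 1) = (1 - QQ ^ n) * ip n := by
  rcases lt_trichotomy n 0 with h | h | h
  · rw [ip_neg h, ip_neg (by omega)]; ring
  · subst h; rw [ip_neg (by omega)]; simp
  · obtain ⟨m, rfl⟩ : ∃ m : ℕ, n = m + 1 := ⟨(n-1).toNat, by omega⟩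
    have e : ((m:ℤ) + 1).toNat = m + 1 := by omega
    have h1 := poch_ne m
    have h2 := poch_ne (m+1)
    simp only [ip, add_sub_cancel_right, e, Int.toNat_natCast]
    rw [if_neg (by omega), if_neg (by omega)]
    have : QQ ^ ((m:ℤ)+1) = QQ ^ (m+1) := by norm_cast
    rw [this]
    field_simp
    rw [poch_succ]

lemma qBin_eq (n k : ℤ) : qBin QQ n k = qPoch QQ n.toNat * ip k * ip (n - k) := by
  unfold qBin
  split_ifs with h
  · simp only [ip]
    rw [if_neg (by omega), if_neg (by omega)]
    have := poch_ne k.toNat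
    have := poch_ne (n-k).toNat
    field_simp
  · rcases lt_or_ge k 0 with h1 | h1
    · rw [ip_neg h1]; ring
    · rw [ip_neg (n := n - k) (by omega)]; ring

lemma QQ_zpow (n : ℤ) : QQ ^ n = qq ^ (2 * n) := by
  unfold QQ; rw [zpow_mul]; norm_cast

/-- trinomial term -/
noncomputable def tA (L a i : ℤ) : RatFunc ℚ :=
  qq ^ ((L - a - 2 * i) * (L - a - 2 * i - 1)) * ip (L - a - 2 * i) * ip i * ip (i + a)

noncomputable def sA (N : ℕ) (L a : ℤ) : RatFunc ℚ := ∑ i ∈ range N, tA L a i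

lemma tA_zero {L a i : ℤ} (h : i < 0 ∨ L < i) : tA L a i = 0 := by
  unfold tA
  rcases h with h | h
  · rw [ip_neg h]; ring
  · rcases lt_or_ge (i + a) 0 with h1 | h1
    · rw [ip_neg h1]; ring
    · rw [ip_neg (n := L - a - 2 * i) (by omega)]; ring

lemma shift (N : ℕ) (h : ℤ → RatFunc ℚ) (h0 : h (-1) = 0) (h1 : h (N - 1) = 0) :
    ∑ i ∈ range N, h ((i:ℤ) - 1) = ∑ i ∈ range N, h i := by
  have e1 := Finset.sum_range_succ' (fun i : ℕ => h ((i:ℤ) - 1)) N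
  have e2 := Finset.sum_range_succ (fun i : ℕ => h ((i:ℤ) - 1)) N
  simp only [h1, add_zero] at e2
  rw [← e2, e1]
  simp [h0]

lemma tA_rec (L a i : ℤ) : (1 - QQ ^ (L+1)) * tA (L+1) a i =
    tA L (a-1) i + tA L (a+1) (i-1) + QQ ^ L * tA L a i - tA (L-1) a (i-1) := by
  unfold tA
  rw [show L - (a-1) - 2*i = L+1-a-2*i by ring, show L - (a+1) - 2*(i-1) = L+1-a-2*i by ring,
    show L - 1 - a - 2*(i-1) = L+1-a-2*i by ring, show i + (a-1) = i + a - 1 by ring,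
    show i - 1 + (a+1) = i + a by ring, show i - 1 + a = i + a - 1 by ring,
    show L - a - 2*i = L+1-a-2*i - 1 by ring]
  obtain ⟨r, hr⟩ : ∃ r, r = L+1-a-2*i := ⟨_, rfl⟩
  obtain ⟨j, hj⟩ : ∃ j, j = i + a := ⟨_, rfl⟩
  rw [← hr, ← hj, ip_rec r, ip_rec i, ip_rec j]
  have hL : L = i + j + r - 1 := by omega
  have e1 : QQ ^ (L+1) = QQ ^ i * QQ ^ j * QQ ^ r := by
    rw [← zpow_add₀ QQ_ne, ← zpow_add₀ QQ_ne]; congr 1; omega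
  have e2 : QQ ^ L * qq ^ ((r-1)*(r-1-1)) = QQ ^ i * QQ ^ j * qq ^ (r*(r-1)) := by
    simp only [QQ_zpow]
    rw [← zpow_add₀ qq_ne, ← zpow_add₀ qq_ne, ← zpow_add₀ qq_ne]; congr 1; rw [hL]; ring
  rw [e1]
  linear_combination (-(1 - QQ ^ r) * ip r * ip i * ip j) * e2

lemma sA_rec (N : ℕ) (L a : ℤ) (h : L + 1 < N) : (1 - QQ ^ (L+1)) * sA N (L+1) a =
    sA N L (a-1) + sA N L (a+1) + QQ ^ L * sA N L a - sA N (L-1) a := by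
  unfold sA
  rw [← shift N (tA L (a+1)) (tA_zero (by omega)) (tA_zero (by omega)),
    ← shift N (tA (L-1) a) (tA_zero (by omega)) (tA_zero (by omega)), mul_sum, mul_sum,
    ← sum_add_distrib, ← sum_add_distrib, ← sum_sub_distrib]
  exact sum_congr rfl fun i _ => tA_rec L a i

noncomputable def gg (k a : ℤ) : RatFunc ℚ :=
  qq ^ (a * (a-1)) * ((1 + QQ ^ a) / (1 + QQ ^ k)) * qPoch QQ (2*k).toNat * ip (k-a) * ip (k+a)

lemma gg_rec (k : ℕ) (a : ℤ) : gg (k+1) a =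
    (1 + QQ ^ (k:ℤ) * QQ ^ (k:ℤ)) * gg k a + QQ ^ (k:ℤ) * (gg k (a-1) + gg k (a+1)) := by
  unfold gg
  rw [show (2 * ((k:ℤ)+1)).toNat = 2*k+1+1 by omega, show (2 * (k:ℤ)).toNat = 2*k by omega,
    poch_succ, poch_succ,
    show (k:ℤ) - (a-1) = k+1-a by ring, show (k:ℤ) + (a-1) = k+1+a-1-1 by ring,
    show (k:ℤ) - (a+1) = k+1-a-1-1 by ring, show (k:ℤ) + (a+1) = k+1+a by ring,
    show (k:ℤ) - a = k+1-a-1 by ring, show (k:ℤ) + a = k+1+a-1 by ring,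
    ip_rec (k+1-a-1), ip_rec (k+1+a-1), ip_rec (k+1-a), ip_rec (k+1+a)]
  have e1 : qq ^ ((a-1)*(a-1-1)) = qq ^ (a*(a-1)) * (QQ / QQ ^ a) := by
    have : QQ / QQ ^ a = QQ ^ (1 - a) := by rw [zpow_sub₀ QQ_ne, zpow_one]
    rw [this, QQ_zpow, ← zpow_add₀ qq_ne]; congr 1; ring
  have e2 : qq ^ ((a+1)*(a+1-1)) = qq ^ (a*(a-1)) * QQ ^ a := by
    rw [QQ_zpow, ← zpow_add₀ qq_ne]; congr 1; ring
  have p1 : 1 + QQ ^ k ≠ 0 := one_add_QQ k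
  have p2 : 1 + QQ ^ k * QQ ≠ 0 := by rw [← pow_succ]; exact one_add_QQ (k+1)
  have hy : QQ ^ a ≠ 0 := zpow_ne_zero _ QQ_ne
  have hQ := QQ_ne
  rw [e1, e2]
  have f1 : QQ ^ (2*k+1) = QQ^k * QQ^k * QQ := by ring
  have f2 : QQ ^ (2*k+1+1) = (QQ^k * QQ) * (QQ^k * QQ) := by ring
  rw [f1, f2]
  simp only [zpow_add₀ QQ_ne, zpow_sub₀ QQ_ne, zpow_one, zpow_natCast]
  generalize QQ ^ a = y at *
  generalize QQ ^ k = K at *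
  generalize qq ^ (a*(a-1)) = E
  generalize ip (k+1-a) = u
  generalize ip (k+1+a) = v
  field_simp
  ring

noncomputable def bb (L k : ℤ) : RatFunc ℚ :=
  (-1) ^ (L - k) * qq ^ (k * (k+1) - 2 * k * L) * ip k * ip (L - k)

lemma bb_zero {L k : ℤ} (h : k < 0 ∨ L < k) : bb L k = 0 := by
  unfold bb
  rcases h with h | h
  · rw [ip_neg h]; ring
  · rw [ip_neg (n := L - k) (by omega)]; ring

lemma bb_rec (L k : ℤ) : (1 - QQ ^ (L+1)) * bb (L+1) k =
    (QQ ^ (k-1))⁻¹ * bb L (k-1) - ((QQ ^ k)⁻¹ + QQ ^ k - QQ ^ L) * bb L k - bb (L-1) k := by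
  unfold bb
  have n1 : (-1 : RatFunc ℚ) ≠ 0 := by norm_num
  have e1 : qq ^ (k * (k+1) - 2 * k * (L+1)) = qq ^ (k * (k+1) - 2 * k * L) / QQ ^ k := by
    rw [QQ_zpow, ← zpow_sub₀ qq_ne]; congr 1; ring
  have e2 : qq ^ ((k-1) * (k-1+1) - 2 * (k-1) * L)
      = qq ^ (k * (k+1) - 2 * k * L) * QQ ^ L / QQ ^ k := by
    rw [QQ_zpow, QQ_zpow, ← zpow_add₀ qq_ne, ← zpow_sub₀ qq_ne]; congr 1; ring
  have e3 : qq ^ (k * (k+1) - 2 * k * (L-1)) = qq ^ (k * (k+1) - 2 * k * L) * QQ ^ k := by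
    rw [QQ_zpow, ← zpow_add₀ qq_ne]; congr 1; ring
  have s1 : (-1 : RatFunc ℚ) ^ (L + 1 - k) = - (-1) ^ (L - k) := by
    rw [show L + 1 - k = L - k + 1 by ring, zpow_add₀ n1]; simp
  have s3 : (-1 : RatFunc ℚ) ^ (L - 1 - k) = - (-1) ^ (L - k) := by
    rw [show L - 1 - k = L - k - 1 by ring, zpow_sub₀ n1]; simp [div_neg]
  rw [e1, e2, e3, show L - (k-1) = L + 1 - k by ring, s1, s3,
    show L - 1 - k = L + 1 - k - 1 - 1 by ring, show ip (L - k) = ip (L+1-k-1) by congr 1; ring,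
    ip_rec (L+1-k-1), ip_rec (L+1-k), ip_rec k]
  have hy : QQ ^ k ≠ 0 := zpow_ne_zero _ QQ_ne
  have hQ := QQ_ne
  simp only [zpow_add₀ QQ_ne, zpow_sub₀ QQ_ne, zpow_one]
  generalize QQ ^ k = y at *
  generalize QQ ^ L = l at *
  generalize ip k = u
  generalize ip (L+1-k) = v
  generalize qq ^ (k * (k+1) - 2 * k * L) = E
  generalize (-1 : RatFunc ℚ) ^ (L-k) = s
  field_simp
  ring

noncomputable def sB (N : ℕ) (L a : ℤ) : RatFunc ℚ := ∑ k ∈ range N, bb L k * gg k a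

lemma sB_rec (N : ℕ) (L a : ℤ) (h : L + 1 < N) : (1 - QQ ^ (L+1)) * sB N (L+1) a =
    sB N L (a-1) + sB N L (a+1) + QQ ^ L * sB N L a - sB N (L-1) a := by
  unfold sB
  have hs := shift N (fun k => (QQ ^ k)⁻¹ * bb L k * gg (k+1) a)
    (by rw [bb_zero (by omega)]; ring) (by rw [bb_zero (by omega)]; ring)
  have e : (1 - QQ ^ (L+1)) * ∑ k ∈ range N, bb (L+1) k * gg k a =
    ∑ k ∈ range N, (QQ ^ ((k:ℤ)-1))⁻¹ * bb L ((k:ℤ)-1) * gg ((k:ℤ)-1+1) a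
    + ∑ k ∈ range N, (- ((QQ ^ (k:ℤ))⁻¹ + QQ ^ (k:ℤ) - QQ ^ L) * bb L k - bb (L-1) k) * gg k a := by
    rw [mul_sum, ← sum_add_distrib]
    refine sum_congr rfl fun k _ => ?_
    rw [sub_add_cancel]
    linear_combination gg k a * bb_rec L k
  rw [e, hs, mul_sum, ← sum_add_distrib, ← sum_add_distrib, ← sum_add_distrib, ← sum_sub_distrib]
  refine sum_congr rfl fun k _ => ?_
  have hy : QQ ^ (k:ℤ) ≠ 0 := zpow_ne_zero _ QQ_ne
  rw [gg_rec]
  field_simp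
  ring

lemma sA_neg (N : ℕ) (a : ℤ) : sA N (-1) a = 0 :=
  sum_eq_zero fun i _ => tA_zero (by omega)

lemma sB_neg (N : ℕ) (a : ℤ) : sB N (-1) a = 0 :=
  sum_eq_zero fun i _ => by rw [bb_zero (by omega)]; ring

lemma sAB_zero (N : ℕ) (a : ℤ) : sA (N+1) 0 a = sB (N+1) 0 a := by
  unfold sA sB
  rw [sum_eq_single 0, sum_eq_single 0]
  · unfold tA bb gg
    rcases lt_trichotomy a 0 with h | h | h
    · simp [ip_neg h]
    · subst h
      have : (1 + 1 : RatFunc ℚ) ≠ 0 := by norm_num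
      simp [ip_zero, qPoch, this]
    · simp [ip_neg (n := -a) (by omega)]
  · intro b _ hb; rw [bb_zero (by omega)]; ring
  · simp
  · intro b _ hb; rw [tA_zero (by omega)]
  · simp

lemma sAB (N n : ℕ) (h : n < N) : ∀ a : ℤ, sA N n a = sB N n a ∧ sA N (n-1) a = sB N (n-1) a := by
  induction n with
  | zero =>
    intro a
    obtain ⟨M, rfl⟩ : ∃ M, N = M + 1 := ⟨N-1, by omega⟩
    simp [sA_neg, sB_neg, sAB_zero]
  | succ n ih =>
    intro a
    have ih := ih (by omega)
    push_cast
    rw [add_sub_cancel_right]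
    refine ⟨?_, (ih a).1⟩
    have hA := sA_rec N n a (by omega)
    have hB := sB_rec N n a (by omega)
    rw [(ih (a-1)).1, (ih (a+1)).1, (ih a).1, (ih a).2, ← hB] at hA
    refine mul_left_cancel₀ ?_ hA
    intro h0
    apply QQ_pow_ne (n+1) (by omega)
    have : QQ ^ ((n:ℤ)+1) = QQ ^ (n+1) := by norm_cast
    rw [this] at h0
    linear_combination -h0

lemma qT_eq (L : ℕ) (a : ℤ) : qT qq 1 L a = qPoch QQ L * sA (L+1) L a := by
  have e1 : sA (L+1) L a = ∑ i ∈ range (L+1), ∑ r ∈ range (L+1),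
      if (r:ℤ) = L - a - 2*i then tA L a i else 0 := by
    unfold sA
    refine sum_congr rfl fun i _ => ?_
    by_cases hr : 0 ≤ (L:ℤ) - a - 2*i ∧ 0 ≤ (i:ℤ) + a
    · rw [sum_eq_single ((L:ℤ) - a - 2*i).toNat]
      · rw [if_pos (by omega)]
      · intro b _ hb; rw [if_neg (by omega)]
      · intro hb; simp only [mem_range] at hb; omega
    · have : tA L a i = 0 := by
        unfold tA
        rcases lt_or_ge ((i:ℤ) + a) 0 with h1 | h1
        · rw [ip_neg h1]; ring
        · rw [ip_neg (n := L - a - 2 * i) (by omega)]; ring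
      simp [this]
  rw [e1, sum_comm, mul_sum]
  unfold qT
  refine sum_congr rfl fun r hr => ?_
  simp only [mem_range] at hr
  split_ifs with h
  · obtain ⟨⟨m, hm⟩, h2⟩ := h
    have ha1 := le_abs_self a
    have ha2 := neg_abs_le a
    obtain ⟨i, rfl⟩ : ∃ i : ℕ, m = i := ⟨m.toNat, by omega⟩
    rw [sum_eq_single i]
    · rw [if_pos (by omega)]
      unfold tA
      rw [show (L:ℤ) - a - 2*i = r by omega, show ((L:ℤ) - a - r)/2 = i by omega,
        show ((L:ℤ) + a - r)/2 = i + a by omega]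
      simp only [ip]
      rw [if_neg (by omega), if_neg (by omega), if_neg (by omega)]
      change _ * qPoch QQ L / (qPoch QQ _ * qPoch QQ _ * qPoch QQ _) = _
      simp only [Int.toNat_natCast]
      have := poch_ne r
      have := poch_ne i
      have := poch_ne (i + a).toNat
      field_simp
    · intro b _ hb; rw [if_neg (by omega)]
    · intro hb; simp only [mem_range] at hb; omega
  · symm
    rw [sum_eq_zero, mul_zero]
    intro i _
    split_ifs with h3
    · have : ¬ (0 ≤ (i:ℤ) + a) := by
        intro h4
        apply h
        refine ⟨⟨i, by omega⟩, ?_⟩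
        rcases abs_cases a with h5 | h5 <;> omega
      unfold tA
      rw [ip_neg (n := i + a) (by omega)]; ring
    · rfl

theorem stmt6 (L : ℕ) (a : ℤ) :
    qT qq 1 L a =
      ∑ k ∈ Finset.range (L + 1),
        (-1 : RatFunc ℚ) ^ (L - k) *
          qq ^ (((L : ℤ) - k) * ((L : ℤ) - k - 1) + a * (a - 1) - (L : ℤ) * ((L : ℤ) - 1)) *
          ((1 + (qq ^ 2) ^ a) / (1 + (qq ^ 2) ^ k)) *
          qBin (qq ^ 2) (L : ℤ) (k : ℤ) * qBin (qq ^ 2) (2 * (k : ℤ)) ((k : ℤ) - a) := by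
  rw [qT_eq, (sAB (L+1) L (by omega) a).1]
  unfold sB
  rw [mul_sum]
  refine sum_congr rfl fun k hk => ?_
  simp only [mem_range] at hk
  change _ = _ * _ * ((1 + QQ ^ a) / (1 + QQ ^ k)) * qBin QQ _ _ * qBin QQ _ _
  rw [qBin_eq, qBin_eq]
  unfold bb gg
  have e1 : (-1 : RatFunc ℚ) ^ ((L:ℤ) - k) = (-1) ^ (L - k) := by
    rw [← zpow_natCast]; congr 1; omega
  have e2 : qq ^ (((L : ℤ) - k) * ((L : ℤ) - k - 1) + a * (a - 1) - (L : ℤ) * ((L : ℤ) - 1))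
      = qq ^ ((k:ℤ) * (k+1) - 2 * k * L) * qq ^ (a * (a-1)) := by
    rw [← zpow_add₀ qq_ne]; congr 1; ring
  rw [e1, e2, show 2 * (k:ℤ) - (k - a) = k + a by ring, zpow_natCast, Int.toNat_natCast]
  ring
end

section
/- For every integer L ≥ 0, ∑_{m₁,m₂≥0, m₁+m₂ even} q^{(m₁²+m₂²)/4} [L+(m₁−m₂)/2 choose m₁]_q [(m₁+m₂)/2 choose m₂]_q = ∑_{j∈ℤ} (−1)^j ( q^{j(20j+1)/2} [2L choose L−4j]_q + q^{(4j+1)(5j+1)/2} [2L choose L−4j−1]_q ). -/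
open Finset

namespace S13

noncomputable def p : RatFunc ℚ := qq ^ 2
noncomputable def x : RatFunc ℚ := qq ^ 4

lemma qq_ne : qq ≠ 0 := RatFunc.X_ne_zero
lemma p_ne : p ≠ 0 := pow_ne_zero _ qq_ne
lemma x_ne : x ≠ 0 := pow_ne_zero _ qq_ne
lemma x_eq (n : ℤ) : x ^ n = p ^ (2 * n) := by
  have : x = p ^ (2 : ℤ) := by
    unfold x p; rw [← zpow_natCast, ← zpow_natCast, ← zpow_mul]; norm_num
  rw [this, ← zpow_mul]
lemma qq_pow_ne (n : ℕ) (hn : n ≠ 0) : qq ^ n ≠ 1 := by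
  intro h
  have h2 : (algebraMap (Polynomial ℚ) (RatFunc ℚ)) (Polynomial.X ^ n) =
      (algebraMap (Polynomial ℚ) (RatFunc ℚ)) 1 := by
    rw [map_pow, RatFunc.algebraMap_X, map_one]; exact h
  have h3 := RatFunc.algebraMap_injective ℚ h2
  have := congrArg Polynomial.natDegree h3
  simp at this
  exact hn this

noncomputable def Q (n : ℤ) : RatFunc ℚ := qPoch x n.toNat
noncomputable def iv (n : ℤ) : RatFunc ℚ := if 0 ≤ n then (Q n)⁻¹ else 0
noncomputable def B (n k : ℤ) : RatFunc ℚ := qBin x n k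

lemma Q_ne (n : ℤ) : Q n ≠ 0 := by
  unfold Q qPoch
  rw [Finset.prod_ne_zero_iff]
  intro j _ h
  have : x ^ (j + 1) = 1 := (sub_eq_zero.mp h).symm
  unfold x at this
  rw [← pow_mul] at this
  exact qq_pow_ne _ (by positivity) this

lemma Q_zero : Q 0 = 1 := by simp [Q, qPoch]
lemma Q_rec (n : ℤ) (hn : 1 ≤ n) : Q n = (1 - x ^ n) * Q (n - 1) := by
  obtain ⟨m, rfl⟩ : ∃ m : ℕ, n = m + 1 := ⟨(n - 1).toNat, by omega⟩
  unfold Q qPoch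
  have h1 : ((m : ℤ) + 1).toNat = m + 1 := by omega
  have h2 : ((m : ℤ) + 1 - 1).toNat = m := by omega
  rw [h1, h2, Finset.prod_range_succ, mul_comm]
  norm_cast

lemma iv_neg {n : ℤ} (hn : n < 0) : iv n = 0 := by simp [iv, hn]
lemma iv_zero : iv 0 = 1 := by simp [iv, Q_zero]
lemma iv_rec (n : ℤ) : iv (n - 1) = (1 - x ^ n) * iv n := by
  rcases lt_trichotomy n 0 with h | h | h
  · rw [iv_neg h, iv_neg (by omega)]; simp
  · subst h; rw [iv_neg (by omega)]; simp
  · have h1 := Q_ne n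
    rw [Q_rec n (by omega)] at h1
    unfold iv
    rw [if_pos (by omega), if_pos (by omega), Q_rec n (by omega)]
    have h2 := left_ne_zero_of_mul h1
    have h3 := right_ne_zero_of_mul h1
    field_simp
lemma iv_nonneg {n : ℤ} (h : iv n ≠ 0) : 0 ≤ n := by
  by_contra h'; exact h (iv_neg (by omega))
lemma Q_iv {n : ℤ} (h : 0 ≤ n) : Q n * iv n = 1 := by
  simp [iv, h, Q_ne]

lemma B_eq {n : ℤ} (hn : 0 ≤ n) (k : ℤ) : B n k = Q n * iv k * iv (n - k) := by
  unfold B qBin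
  split_ifs with h
  · unfold iv
    rw [if_pos h.1, if_pos (by omega)]
    unfold Q
    rw [div_eq_mul_inv, mul_inv, mul_assoc]
  · rcases lt_or_ge k 0 with h1 | h1
    · rw [iv_neg h1]; simp
    · rw [iv_neg (n := n - k) (by omega)]; simp

lemma B_supp {n k : ℤ} (h : B n k ≠ 0) : 0 ≤ k ∧ k ≤ n := by
  by_contra h'; exact h (by unfold B qBin; rw [if_neg h'])
lemma B_zero' {n k : ℤ} (h : ¬ (0 ≤ k ∧ k ≤ n)) : B n k = 0 := by
  unfold B qBin; rw [if_neg h]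

lemma B_symm (n k : ℤ) : B n (n - k) = B n k := by
  by_cases h : 0 ≤ n
  · rw [B_eq h, B_eq h]; ring_nf
  · rw [B_zero' (by omega), B_zero' (by omega)]

lemma pascal1 {n : ℤ} (hn : 0 ≤ n) (k : ℤ) : B (n + 1) k = B n (k - 1) + x ^ k * B n k := by
  have e1 : n + 1 - k - 1 = n - k := by ring
  have h1 := iv_rec k
  have h2 := iv_rec (n + 1 - k)
  have h3 := Q_rec (n + 1) (by omega)
  have e2 : n + 1 - 1 = n := by ring
  have e3 : n - (k - 1) = n + 1 - k := by ring
  rw [e1] at h2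
  rw [e2] at h3
  rw [B_eq hn, B_eq hn, B_eq (by omega), h3, e3, h1, h2]
  have : x ^ (n + 1) = x ^ k * x ^ (n + 1 - k) := by
    rw [← zpow_add₀ x_ne]; congr 1; ring
  rw [this]; ring

lemma pascal2 {n : ℤ} (hn : 0 ≤ n) (k : ℤ) :
    B (n + 1) k = B n k + x ^ (n + 1 - k) * B n (k - 1) := by
  rw [← B_symm (n + 1) k, pascal1 hn, ← B_symm n k, ← B_symm n (k - 1)]
  have e1 : n + 1 - k - 1 = n - k := by ring
  have e3 : n - (k - 1) = n + 1 - k := by ring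
  rw [e1, e3]

lemma fs_shift (f : ℤ → RatFunc ℚ) (c : ℤ) : ∑ᶠ j, f (j + c) = ∑ᶠ j, f j :=
  finsum_comp_equiv (Equiv.addRight c)
lemma fs_neg (f : ℤ → RatFunc ℚ) (c : ℤ) : ∑ᶠ j, f (c - j) = ∑ᶠ j, f j :=
  finsum_comp_equiv (Equiv.subLeft c)

lemma fs_eq (f : ℤ → RatFunc ℚ) (a b : ℤ) (h : ∀ j, f j ≠ 0 → a ≤ j ∧ j ≤ b) :
    ∑ᶠ j, f j = ∑ j ∈ Finset.Icc a b, f j := by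
  apply finsum_eq_sum_of_support_subset
  intro j hj
  simpa using h j hj

lemma fs_swap (f : ℤ → ℤ → RatFunc ℚ) (a b : ℤ)
    (h : ∀ i j, f i j ≠ 0 → (a ≤ i ∧ i ≤ b) ∧ (a ≤ j ∧ j ≤ b)) :
    ∑ᶠ i, ∑ᶠ j, f i j = ∑ᶠ j, ∑ᶠ i, f i j := by
  rw [fs_eq _ a b, fs_eq _ a b]
  · rw [Finset.sum_congr rfl (fun i _ => fs_eq (fun j => f i j) a b (fun j hj => (h i j hj).2)),
      Finset.sum_comm]
    exact Finset.sum_congr rfl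
      (fun j _ => (fs_eq (fun i => f i j) a b (fun i hi => (h i j hi).1)).symm)
  · intro j hj
    by_contra h'
    apply hj
    rw [← finsum_zero (α := ℤ)]
    congr 1; ext i
    by_contra h2
    exact h' (h i j h2).2
  · intro j hj
    by_contra h'
    apply hj
    rw [← finsum_zero (α := ℤ)]
    congr 1; ext i
    by_contra h2
    exact h' (h j i h2).1

lemma vand (m : ℕ) (n : ℤ) (hn : 0 ≤ n) (k : ℤ) :
    B (m + n) k = ∑ᶠ j : ℤ, x ^ ((m - j) * (k - j)) * B m j * B n (k - j) := by
  induction m generalizing k with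
  | zero =>
    rw [fs_eq _ 0 0]
    · simp
      have : B 0 0 = 1 := by rw [B_eq le_rfl]; simp [Q_zero, iv_zero]
      rw [this]; simp
    · intro j hj
      have := B_supp (right_ne_zero_of_mul (left_ne_zero_of_mul hj))
      simpa using this
  | succ m ih =>
    push_cast
    have e : (m : ℤ) + 1 + n = (m + n) + 1 := by ring
    rw [e, pascal1 (by omega), ih, ih,
      ← fs_shift (fun j => x ^ (((m : ℤ) - j) * (k - 1 - j)) * B m j * B n (k - 1 - j)) (-1),
      fs_eq _ 0 (m + 1), fs_eq _ 0 (m + 1), fs_eq _ 0 (m + 1), Finset.mul_sum,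
      ← Finset.sum_add_distrib]
    · apply Finset.sum_congr rfl
      intro j _
      rw [pascal1 (by omega)]
      have e1 : k - 1 - (j + -1) = k - j := by ring
      have e2 : (m : ℤ) - (j + -1) = m + 1 - j := by ring
      have e3 : j + -1 = j - 1 := by ring
      rw [e1, e2, e3]
      have : x ^ k * x ^ (((m : ℤ) - j) * (k - j)) =
          x ^ (((m : ℤ) + 1 - j) * (k - j)) * x ^ j := by
        rw [← zpow_add₀ x_ne, ← zpow_add₀ x_ne]; congr 1; ring
      linear_combination (B m j * B n (k - j)) * this
    · intro j hj
      have := B_supp (right_ne_zero_of_mul (left_ne_zero_of_mul hj))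
      omega
    · intro j hj
      have := B_supp (right_ne_zero_of_mul (left_ne_zero_of_mul hj))
      omega
    · intro j hj
      have := B_supp (right_ne_zero_of_mul (left_ne_zero_of_mul hj))
      omega

noncomputable def t (L k u : ℤ) : RatFunc ℚ :=
  p ^ ((L - 2 * u - k) ^ 2) * (Q L * iv u * iv (u + k) * iv (L - 2 * u - k))
noncomputable def T (L k : ℤ) : RatFunc ℚ := ∑ᶠ u, t L k u

lemma t_supp {L k u : ℤ} (h : t L k u ≠ 0) : 0 ≤ u ∧ 0 ≤ u + k ∧ 0 ≤ L - 2 * u - k := by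
  have h1 := right_ne_zero_of_mul h
  have h2 := iv_nonneg (right_ne_zero_of_mul h1)
  have h3 := left_ne_zero_of_mul h1
  have h4 := iv_nonneg (right_ne_zero_of_mul h3)
  have h5 := iv_nonneg (right_ne_zero_of_mul (left_ne_zero_of_mul h3))
  exact ⟨h5, h4, h2⟩

lemma T_zero {L k : ℤ} (h : L < |k|) : T L k = 0 := by
  unfold T
  rw [← finsum_zero (α := ℤ)]
  congr 1; ext u
  by_contra h2
  have := t_supp h2
  rcases abs_cases k with h3 | h3 <;> omega

lemma T_eq (M e : ℤ) {L k : ℤ} (he : 0 ≤ e) (hM : L + e ≤ M) :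
    T L k = ∑ u ∈ Finset.Icc 0 M, t L k (u - e) := by
  unfold T
  rw [← fs_shift _ (-e), fs_eq _ 0 M]
  · rfl
  · intro j hj
    have := t_supp hj
    omega

lemma T_rec1 (L k : ℤ) (hL : 2 ≤ L) :
    T L k = T (L - 1) (k - 1) + T (L - 1) (k + 1) + p ^ (2 * L - 1) * T (L - 1) k
      + (p ^ (2 * L - 2) - 1) * T (L - 2) k := by
  rw [T_eq (L + 1) 0 (L := L) (by omega) (by omega),
    T_eq (L + 1) 0 (L := L - 1) (k := k - 1) (by omega) (by omega),
    T_eq (L + 1) 1 (L := L - 1) (k := k + 1) (by omega) (by omega),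
    T_eq (L + 1) 0 (L := L - 1) (k := k) (by omega) (by omega),
    T_eq (L + 1) 1 (L := L - 2) (k := k) (by omega) (by omega),
    Finset.mul_sum, Finset.mul_sum, ← Finset.sum_add_distrib, ← Finset.sum_add_distrib,
    ← Finset.sum_add_distrib]
  apply Finset.sum_congr rfl
  intro u _
  unfold t
  obtain ⟨v, hv⟩ : ∃ v, v = u + k := ⟨_, rfl⟩
  obtain ⟨r, hr⟩ : ∃ r, r = L - 2 * u - k := ⟨_, rfl⟩
  have e1 : u - 0 = u := by ring
  rw [e1, show L - 1 - 2 * u - (k - 1) = r by omega, show L - 1 - 2 * (u - 1) - (k + 1) = r by omega,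
    show L - 1 - 2 * u - k = r - 1 by omega, show L - 2 - 2 * (u - 1) - k = r by omega,
    show L - 2 * u - k = r by omega, show u + (k - 1) = v - 1 by omega,
    show u - 1 + (k + 1) = v by omega, show u - 1 + k = v - 1 by omega, ← hv,
    Q_rec L (by omega), Q_rec (L - 1) (by omega), show L - 1 - 1 = L - 2 by ring,
    iv_rec u, iv_rec v, iv_rec r, x_eq, x_eq, x_eq, x_eq, x_eq]
  have h1 : p ^ (2 * L) = p ^ (2 * u) * p ^ (2 * v) * p ^ (2 * r) := by
    rw [← zpow_add₀ p_ne, ← zpow_add₀ p_ne]; congr 1; omega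
  have h2 : p ^ (2 * L - 1) * p ^ ((r - 1) ^ 2) = p ^ (2 * u) * p ^ (2 * v) * p ^ (r ^ 2) := by
    rw [← zpow_add₀ p_ne, ← zpow_add₀ p_ne, ← zpow_add₀ p_ne]; congr 1
    have : L = u + v + r := by omega
    rw [this]; ring
  have e2 : 2 * (L - 1) = 2 * L - 2 := by ring
  rw [e2, h1]
  linear_combination
    (-(1 - p ^ (2 * L - 2)) * Q (L - 2) * iv u * iv v * (1 - p ^ (2 * r)) * iv r) * h2

lemma T_rec2 (L k : ℤ) (hL : 1 ≤ L) :
    T L k - p ^ (2 * k + 1) * T L (k + 1) =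
      T (L - 1) (k - 1) - p ^ (2 * k + 1) * T (L - 1) (k + 2) := by
  have hA : T L k - T (L - 1) (k - 1) =
      ∑ u ∈ Finset.Icc 0 (L + 1), p ^ ((L - 2 * u - k) ^ 2 + 2 * (u + k)) *
        (Q (L - 1) * iv u * iv (u + k) * iv (L - 2 * u - k - 1)) +
      ∑ u ∈ Finset.Icc 0 (L + 1), p ^ ((L - 2 * u - k) ^ 2 + 2 * (L - u)) *
        (Q (L - 1) * iv (u - 1) * iv (u + k) * iv (L - 2 * u - k)) := by
    rw [T_eq (L + 1) 0 (L := L) (by omega) (by omega),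
      T_eq (L + 1) 0 (L := L - 1) (k := k - 1) (by omega) (by omega),
      ← Finset.sum_add_distrib, ← Finset.sum_sub_distrib]
    apply Finset.sum_congr rfl
    intro u _
    unfold t
    obtain ⟨v, hv⟩ : ∃ v, v = u + k := ⟨_, rfl⟩
    obtain ⟨r, hr⟩ : ∃ r, r = L - 2 * u - k := ⟨_, rfl⟩
    have e1 : u - 0 = u := by ring
    rw [e1, show L - 1 - 2 * u - (k - 1) = r by omega,
      show L - 2 * u - k = r by omega, show u + (k - 1) = v - 1 by omega,
      ← hv, Q_rec L (by omega), iv_rec u, iv_rec v, iv_rec r, x_eq, x_eq, x_eq, x_eq,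
      show L - u = v + r by omega, show L = u + v + r by omega]
    simp only [mul_add, zpow_add₀ p_ne]
    ring
  have hB : p ^ (2 * k + 1) * (T L (k + 1) - T (L - 1) (k + 2)) =
      ∑ u ∈ Finset.Icc 0 (L + 1), p ^ ((L - 2 * u - k) ^ 2 + 2 * (u + k)) *
        (Q (L - 1) * iv u * iv (u + k) * iv (L - 2 * u - k - 1)) +
      ∑ u ∈ Finset.Icc 0 (L + 1), p ^ ((L - 2 * u - k - 1) ^ 2 + 2 * (u + k) + 1) *
        (Q (L - 1) * iv u * iv (u + k + 1) * iv (L - 2 * u - k - 2)) := by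
    rw [T_eq (L + 1) 0 (L := L) (by omega) (by omega),
      T_eq (L + 1) 1 (L := L - 1) (k := k + 2) (by omega) (by omega),
      ← Finset.sum_add_distrib, ← Finset.sum_sub_distrib, Finset.mul_sum]
    apply Finset.sum_congr rfl
    intro u _
    unfold t
    obtain ⟨v, hv⟩ : ∃ v, v = u + k + 1 := ⟨_, rfl⟩
    obtain ⟨r, hr⟩ : ∃ r, r = L - 2 * u - k - 1 := ⟨_, rfl⟩
    have e1 : u - 0 = u := by ring
    rw [e1, show L - 1 - 2 * (u - 1) - (k + 2) = r by omega,
      show L - 2 * u - (k + 1) = r by omega, show u - 1 + (k + 2) = v by omega,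
      show u + (k + 1) = v by omega, show L - 2 * u - k - 1 = r by omega,
      show L - 2 * u - k - 2 = r - 1 by omega, show L - 2 * u - k = r + 1 by omega,
      show u + k + 1 = v by omega, show u + k = v - 1 by omega,
      show k = v - u - 1 by omega,
      Q_rec L (by omega), iv_rec u, iv_rec v, iv_rec r, x_eq, x_eq, x_eq, x_eq,
      show L = u + v + r by omega]
    have h0 : p ^ (2 * (v - u - 1) + 1) * p ^ (2 * u) = p ^ (2 * v - 1) := by
      rw [← zpow_add₀ p_ne]; congr 1; ring
    have h1 : p ^ ((r + 1) ^ 2 + 2 * (v - 1)) = p ^ (2 * v - 1) * p ^ (r ^ 2) * p ^ (2 * r) := by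
      rw [← zpow_add₀ p_ne, ← zpow_add₀ p_ne]; congr 1; ring
    have h2 : p ^ (r ^ 2 + 2 * (v - 1) + 1) = p ^ (2 * v - 1) * p ^ (r ^ 2) := by
      rw [← zpow_add₀ p_ne]; congr 1; ring
    have h3 : p ^ (2 * (u + v + r)) = p ^ (2 * u) * p ^ (2 * v) * p ^ (2 * r) := by
      rw [← zpow_add₀ p_ne, ← zpow_add₀ p_ne]; congr 1; ring
    rw [h1, h2, h3, ← h0]
    ring
  have hC : ∑ u ∈ Finset.Icc 0 (L + 1), p ^ ((L - 2 * u - k) ^ 2 + 2 * (L - u)) *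
        (Q (L - 1) * iv (u - 1) * iv (u + k) * iv (L - 2 * u - k)) =
      ∑ u ∈ Finset.Icc 0 (L + 1), p ^ ((L - 2 * u - k - 1) ^ 2 + 2 * (u + k) + 1) *
        (Q (L - 1) * iv u * iv (u + k + 1) * iv (L - 2 * u - k - 2)) := by
    rw [← fs_eq _ 0 (L + 1), ← fs_eq _ 0 (L + 1), ← fs_shift _ 1]
    · congr 1; ext u
      congr 1
      · congr 1; ring
      · rw [show u + 1 - 1 = u by ring, show u + 1 + k = u + k + 1 by ring,
          show L - 2 * (u + 1) - k = L - 2 * u - k - 2 by ring]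
    · intro u h
      have h1 := right_ne_zero_of_mul h
      have h2 := iv_nonneg (right_ne_zero_of_mul h1)
      have h3 := left_ne_zero_of_mul h1
      have h4 := iv_nonneg (right_ne_zero_of_mul h3)
      have h5 := iv_nonneg (right_ne_zero_of_mul (left_ne_zero_of_mul h3))
      omega
    · intro u h
      have h1 := right_ne_zero_of_mul h
      have h2 := iv_nonneg (right_ne_zero_of_mul h1)
      have h3 := left_ne_zero_of_mul h1
      have h4 := iv_nonneg (right_ne_zero_of_mul h3)
      have h5 := iv_nonneg (right_ne_zero_of_mul (left_ne_zero_of_mul h3))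
      omega
  rw [hC] at hA
  linear_combination hA - hB

noncomputable def c (j : ℤ) : RatFunc ℚ := (-1) ^ j * p ^ (j * (4 * j + 1))
lemma c_succ (j : ℤ) : c (j + 1) = - (p ^ (2 * (4 * j + 2) + 1) * c j) := by
  unfold c
  rw [zpow_add₀ (by norm_num), show (j + 1) * (4 * (j + 1) + 1) =
    2 * (4 * j + 2) + 1 + j * (4 * j + 1) by ring, zpow_add₀ p_ne]
  ring

noncomputable def R (s : ℤ) : RatFunc ℚ := ∑ᶠ j, c j * (T s (4 * j) + T s (4 * j + 1))

lemma R_eq (s M : ℤ) (hM : s ≤ M) :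
    R s = ∑ j ∈ Finset.Icc (-M) M, c j * (T s (4 * j) + T s (4 * j + 1)) := by
  unfold R
  apply fs_eq
  intro j hj
  by_contra h
  apply hj
  rw [T_zero, T_zero]
  · simp
  · rcases abs_cases (4 * j + 1) with h3 | h3 <;> omega
  · rcases abs_cases (4 * j) with h3 | h3 <;> omega

lemma cT (s M e f : ℤ) (hM : s + 2 ≤ M) (he : -1 ≤ e) (he' : e ≤ 4) (hf : 0 ≤ f) (hf' : f ≤ 1) :
    ∑ j ∈ Finset.Icc (-M) M, c (j + f) * T s (4 * (j + f) + e) = ∑ᶠ j, c j * T s (4 * j + e) := by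
  rw [← fs_shift _ f, fs_eq _ (-M) M]
  intro j hj
  by_contra h
  apply right_ne_zero_of_mul hj
  apply T_zero
  rcases abs_cases (4 * (j + f) + e) with h3 | h3 <;> omega

lemma R_rec (s : ℤ) (hs : 2 ≤ s) :
    R s = (1 + p ^ (2 * s - 1)) * R (s - 1) + p ^ (2 * s - 2) * R (s - 2) := by
  have k1 := cT (s - 1) (s + 2) (-1) 0 (by omega) (by omega) (by omega) (by omega) (by omega)
  rw [← cT (s - 1) (s + 2) (-1) 1 (by omega) (by omega) (by omega) (by omega) (by omega)] at k1
  have k2 := cT (s - 2) (s + 2) 0 0 (by omega) (by omega) (by omega) (by omega) (by omega)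
  rw [← cT (s - 2) (s + 2) 0 1 (by omega) (by omega) (by omega) (by omega) (by omega)] at k2
  rw [R_eq s (s + 2) (by omega), R_eq (s - 1) (s + 2) (by omega), R_eq (s - 2) (s + 2) (by omega)]
  have key : ∑ j ∈ Finset.Icc (-(s + 2)) (s + 2), (c j * T (s - 1) (4 * j + 2)
      - c j * T (s - 2) (4 * j + 1) + c (j + 1) * T (s - 1) (4 * (j + 1) + -1)
      - c (j + 1) * T (s - 2) (4 * (j + 1) + 0)) = 0 := by
    apply Finset.sum_eq_zero
    intro j _
    have := T_rec2 (s - 1) (4 * j + 2) (by omega)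
    rw [show s - 1 - 1 = s - 2 by ring, show 4 * j + 2 - 1 = 4 * j + 1 by ring,
      show 4 * j + 2 + 1 = 4 * j + 3 by ring, show 4 * j + 2 + 2 = 4 * j + 4 by ring] at this
    rw [c_succ, show 4 * (j + 1) + -1 = 4 * j + 3 by ring, show 4 * (j + 1) + 0 = 4 * j + 4 by ring]
    linear_combination (c j) * this
  have main : ∑ j ∈ Finset.Icc (-(s + 2)) (s + 2), c j * (T s (4 * j) + T s (4 * j + 1)) =
    ∑ j ∈ Finset.Icc (-(s + 2)) (s + 2), ((1 + p ^ (2 * s - 1)) *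
        (c j * (T (s - 1) (4 * j) + T (s - 1) (4 * j + 1))) + p ^ (2 * s - 2) *
        (c j * (T (s - 2) (4 * j) + T (s - 2) (4 * j + 1))) +
        (c j * T (s - 1) (4 * j + 2) - c j * T (s - 2) (4 * j + 1) +
          c (j + 0) * T (s - 1) (4 * (j + 0) + -1) - c (j + 0) * T (s - 2) (4 * (j + 0) + 0))) := by
    apply Finset.sum_congr rfl
    intro j _
    rw [T_rec1 s (4 * j) hs, T_rec1 s (4 * j + 1) hs, show j + 0 = j by ring,
      show 4 * j + 1 - 1 = 4 * j by ring, show 4 * j + 1 + 1 = 4 * j + 2 by ring,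
      show 4 * j + -1 = 4 * j - 1 by ring, show 4 * j + 0 = 4 * j by ring]
    ring
  rw [main]
  simp only [Finset.sum_add_distrib, Finset.sum_sub_distrib] at key ⊢
  rw [k1, k2, key, Finset.mul_sum, Finset.mul_sum, add_zero]

lemma T00 : T 0 0 = 1 := by
  rw [T_eq 0 0 le_rfl (by omega)]
  simp [t, Q_zero, iv_zero]
lemma T01 : T 0 1 = 0 := T_zero (by norm_num)
lemma T10 : T 1 0 = p := by
  rw [T_eq 1 0 le_rfl (by omega), show Finset.Icc (0 : ℤ) 1 = {0, 1} by decide]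
  have := Q_iv (n := 1) (by omega)
  have h : iv (-1) = 0 := iv_neg (by omega)
  simp [t, iv_zero, h, this]
lemma T11 : T 1 1 = 1 := by
  rw [T_eq 1 0 le_rfl (by omega), show Finset.Icc (0 : ℤ) 1 = {0, 1} by decide]
  have := Q_iv (n := 1) (by omega)
  have h : iv (-2) = 0 := iv_neg (by omega)
  simp [t, iv_zero, h, this]
lemma R0 : R 0 = 1 := by
  rw [R_eq 0 0 le_rfl]
  simp [T00, T01, c]
lemma R1 : R 1 = 1 + p := by
  rw [R_eq 1 1 le_rfl, show Finset.Icc (-1 : ℤ) 1 = {-1, 0, 1} by decide]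
  have h1 : T 1 (-4) = 0 := T_zero (by norm_num)
  have h2 : T 1 (-3) = 0 := T_zero (by norm_num)
  have h3 : T 1 4 = 0 := T_zero (by norm_num)
  have h4 : T 1 5 = 0 := T_zero (by norm_num)
  simp [T10, T11, c, h1, h2, h3, h4]
  ring

noncomputable def g (s a b : ℤ) : RatFunc ℚ := p ^ (a ^ 2 + b ^ 2) * (B a b * B (s - b) a)
noncomputable def G (s : ℤ) : RatFunc ℚ := ∑ᶠ a, ∑ᶠ b, g s a b

lemma g_supp {s a b : ℤ} (h : g s a b ≠ 0) : 0 ≤ b ∧ b ≤ a ∧ a ≤ s - b := by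
  have h1 := right_ne_zero_of_mul h
  have h2 := B_supp (right_ne_zero_of_mul h1)
  have h3 := B_supp (left_ne_zero_of_mul h1)
  omega

lemma G_eq (s M e f : ℤ) (he : 0 ≤ e) (he' : e ≤ 1) (hf : 0 ≤ f) (hf' : f ≤ 1) (hM : s + 1 ≤ M) :
    G s = ∑ a ∈ Finset.Icc (-1) M, ∑ b ∈ Finset.Icc (-1) M, g s (a + e) (b - f) := by
  unfold G
  rw [← fs_shift _ e, fs_eq _ (-1) M]
  · apply Finset.sum_congr rfl
    intro a _
    rw [← fs_shift _ (-f), fs_eq _ (-1) M]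
    · rfl
    · intro b hb
      have := g_supp hb
      omega
  · intro a ha
    by_contra h'
    apply ha
    rw [← finsum_zero (α := ℤ)]
    congr 1; ext b
    by_contra h2
    have := g_supp h2
    omega

lemma g_rec (s a b : ℤ) (hs : 1 ≤ s) :
    g s (a + 1) b = g (s - 1) (a + 1) b + p ^ (2 * s - 1) * g (s - 1) a b
      + p ^ (2 * s - 2) * g (s - 2) a (b - 1) := by
  unfold g
  rcases lt_trichotomy a (-1) with h | h | h
  · rw [B_zero' (n := a + 1) (by omega), B_zero' (n := a) (by omega),
      B_zero' (n := a) (by omega)]; simp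
  · subst h
    rw [B_zero' (n := -1) (by omega), B_zero' (n := -1) (by omega)]
    by_cases hb : b = 0
    · subst hb
      have h0 : iv 0 = 1 := iv_zero
      have e1 : B (s - 0) (-1 + 1) = 1 := by
        rw [B_eq (by omega)]; simp [h0, Q_iv (n := s) (by omega)]
      have e2 : B (s - 1 - 0) (-1 + 1) = 1 := by
        rw [B_eq (by omega)]; simp [h0, Q_iv (n := s - 1) (by omega)]
      rw [e1, e2]; simp
    · rw [B_zero' (n := -1 + 1) (by omega)]; simp
  · rw [pascal1 (n := a) (by omega), show s - 2 - (b - 1) = s - 1 - b by ring]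
    have e : B (s - b) (a + 1) = B (s - 1 - b) (a + 1) + x ^ (s - b - a - 1) * B (s - 1 - b) a := by
      by_cases hb : b ≤ s - 1
      · have := pascal2 (n := s - 1 - b) (by omega) (a + 1)
        rw [show s - 1 - b + 1 = s - b by ring, show a + 1 - 1 = a by ring,
          show s - b - (a + 1) = s - b - a - 1 by ring] at this
        exact this
      · rw [B_zero' (by omega), B_zero' (by omega), B_zero' (by omega)]; simp
    rw [e, x_eq, x_eq]
    have h1 : p ^ ((a + 1) ^ 2 + b ^ 2) * p ^ (2 * (s - b - a - 1)) =
        p ^ (2 * s - 2) * p ^ (a ^ 2 + (b - 1) ^ 2) := by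
      rw [← zpow_add₀ p_ne, ← zpow_add₀ p_ne]; congr 1; ring
    have h2 : p ^ (2 * s - 2) * p ^ (a ^ 2 + (b - 1) ^ 2) * p ^ (2 * b) =
        p ^ (2 * s - 1) * p ^ (a ^ 2 + b ^ 2) := by
      rw [← zpow_add₀ p_ne, ← zpow_add₀ p_ne, ← zpow_add₀ p_ne]; congr 1; ring
    linear_combination ((B a (b - 1) + p ^ (2 * b) * B a b) * B (s - 1 - b) a) * h1 +
      (B a b * B (s - 1 - b) a) * h2

lemma G_rec (s : ℤ) (hs : 1 ≤ s) :
    G s = (1 + p ^ (2 * s - 1)) * G (s - 1) + p ^ (2 * s - 2) * G (s - 2) := by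
  rw [G_eq s (s + 1) 1 0 (by omega) (by omega) (by omega) (by omega) (by omega),
    add_mul, one_mul]
  nth_rewrite 1 [G_eq (s - 1) (s + 1) 1 0 (by omega) (by omega) (by omega) (by omega) (by omega)]
  rw [G_eq (s - 1) (s + 1) 0 0 (by omega) (by omega) (by omega) (by omega) (by omega),
    G_eq (s - 2) (s + 1) 0 1 (by omega) (by omega) (by omega) (by omega) (by omega)]
  simp only [Finset.mul_sum, ← Finset.sum_add_distrib]
  apply Finset.sum_congr rfl
  intro a _
  apply Finset.sum_congr rfl
  intro b _
  rw [sub_zero, add_zero]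
  exact g_rec s a b hs

lemma Gneg (s : ℤ) (hs : s < 0) : G s = 0 := by
  rw [G_eq s 0 0 0 le_rfl (by omega) le_rfl (by omega) (by omega)]
  apply Finset.sum_eq_zero
  intro a _
  apply Finset.sum_eq_zero
  intro b _
  by_contra h2
  have := g_supp h2
  omega
lemma G0 : G 0 = 1 := by
  unfold G
  rw [fs_eq _ 0 0]
  · simp only [Finset.Icc_self, Finset.sum_singleton]
    rw [fs_eq _ 0 0]
    · have h0 : iv 0 = 1 := iv_zero
      simp [g, B_eq, h0, Q_zero]
    · intro b hb
      have := g_supp hb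
      omega
  · intro a ha
    by_contra h'
    apply ha
    refine finsum_eq_zero_of_forall_eq_zero ?_
    intro b
    by_contra h2
    have := g_supp h2
    omega
lemma G1 : G 1 = 1 + p := by
  rw [G_rec 1 le_rfl, show (1 : ℤ) - 1 = 0 by ring, G0, Gneg (1 - 2) (by omega)]
  simp

lemma G_eq_R (n : ℕ) : G n = R n ∧ G (n + 1) = R (n + 1) := by
  induction n with
  | zero => simp [G0, G1, R0, R1]
  | succ n ih =>
    push_cast
    refine ⟨ih.2, ?_⟩
    rw [G_rec _ (by omega), R_rec _ (by omega), show (n : ℤ) + 1 + 1 - 1 = n + 1 by ring,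
      show (n : ℤ) + 1 + 1 - 2 = n by ring, ih.1, ih.2]

lemma T_to_B (L : ℕ) (k : ℤ) :
    p ^ (k ^ 2) * B (2 * L) (L - k) = ∑ s ∈ Finset.Icc (0 : ℤ) L, p ^ (s ^ 2) * B L s * T s k := by
  -- common two-variable summand
  let f : ℤ → ℤ → RatFunc ℚ := fun s u =>
    p ^ (s ^ 2 + (s - 2 * u - k) ^ 2) *
      (Q L * iv (L - s) * iv u * iv (u + k) * iv (s - 2 * u - k))
  have fsupp : ∀ s u, f s u ≠ 0 → s ≤ L ∧ 0 ≤ u ∧ 0 ≤ u + k ∧ 0 ≤ s - 2 * u - k := by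
    intro s u h
    have h1 := right_ne_zero_of_mul h
    have h2 := iv_nonneg (right_ne_zero_of_mul h1)
    have h3 := left_ne_zero_of_mul h1
    have h4 := iv_nonneg (right_ne_zero_of_mul h3)
    have h5 := left_ne_zero_of_mul h3
    have h6 := iv_nonneg (right_ne_zero_of_mul h5)
    have h7 := iv_nonneg (right_ne_zero_of_mul (left_ne_zero_of_mul h5))
    omega
  have hR : ∑ s ∈ Finset.Icc (0 : ℤ) L, p ^ (s ^ 2) * B L s * T s k = ∑ᶠ s, ∑ᶠ u, f s u := by
    rw [fs_eq _ 0 L]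
    · apply Finset.sum_congr rfl
      intro s hs
      rw [Finset.mem_Icc] at hs
      unfold T
      rw [fs_eq _ 0 L, fs_eq _ 0 L, Finset.mul_sum]
      · apply Finset.sum_congr rfl
        intro u _
        simp only [f, t]
        rw [B_eq (by omega), zpow_add₀ p_ne]
        have := Q_iv hs.1
        linear_combination (p ^ (s ^ 2) * p ^ ((s - 2 * u - k) ^ 2) * Q L * iv (L - s) * iv u *
          iv (u + k) * iv (s - 2 * u - k)) * this
      · intro u hu
        have := fsupp s u hu
        omega
      · intro u hu
        have := t_supp hu
        omega
    · intro s hs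
      by_contra h'
      apply hs
      rw [← finsum_zero (α := ℤ)]
      congr 1; ext u
      by_contra h2
      have := fsupp s u h2
      omega
  have hL : p ^ (k ^ 2) * B (2 * L) (L - k) =
      ∑ᶠ d, ∑ᶠ u, f (d + (u + k)) u := by
    have hv := vand L L (by omega) (L - k)
    rw [show (L : ℤ) + L = 2 * L by ring, ← fs_neg _ (L : ℤ)] at hv
    rw [← fs_shift _ k] at hv
    rw [hv, fs_eq _ (-(L + |k|)) (L + |k|), fs_eq _ (-(L + |k|)) (L + |k|), Finset.mul_sum]
    · apply Finset.sum_congr rfl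
      intro d hd
      by_cases hd' : 0 ≤ d ∧ d ≤ L
      · obtain ⟨m, rfl⟩ : ∃ m : ℕ, d = m := ⟨d.toNat, by omega⟩
        have hv2 := vand m (L - m) (by omega) (m + k)
        rw [← fs_neg _ (m : ℤ), show (m : ℤ) + (L - m) = L by ring, fs_eq _ 0 m] at hv2
        · rw [show (L : ℤ) - k - (L - (m + k)) = m by ring, B_symm, hv2, fs_eq _ 0 m]
          · simp only [Finset.mul_sum, Finset.sum_mul]
            apply Finset.sum_congr rfl
            intro u hu
            rw [Finset.mem_Icc] at hu
            simp only [f]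
            rw [B_eq (n := L) (by omega), B_eq (n := m) (by omega), B_eq (by omega),
              show (m : ℤ) - (m - u) = u by ring, show (m : ℤ) + k - (m - u) = u + k by ring,
              show (m : ℤ) + (u + k) - 2 * u - k = m - u by ring,
              show (L : ℤ) - m - (u + k) = L - (m + (u + k)) by ring, x_eq, x_eq]
            have h1 := Q_iv (n := m) (by omega)
            have h2 := Q_iv (n := L - m) (by omega)
            have h3 : p ^ (((m : ℤ) + (u + k)) ^ 2 + (m - u) ^ 2) =
                p ^ (k ^ 2) * p ^ (2 * (((L : ℤ) - (L - (m + k))) * m)) *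
                  p ^ (2 * (u * (u + k))) := by
              rw [← zpow_add₀ p_ne, ← zpow_add₀ p_ne]; congr 1; ring
            rw [h3]
            linear_combination (p ^ (k ^ 2) * p ^ (2 * (((L : ℤ) - (L - (m + k))) * m)) *
              p ^ (2 * (u * (u + k))) * (Q L * iv (L - (m + (u + k))) * iv u * iv (u + k) *
              iv (m - u))) * (Q (L - m) * iv (L - m) * h1 + h2)
          · intro u hu
            have := fsupp _ u hu
            omega
        · intro u hu
          have := B_supp (right_ne_zero_of_mul (left_ne_zero_of_mul hu))
          omega
      · have : B (L : ℤ) ((L : ℤ) - k - (L - (d + k))) = 0 := B_zero' (by omega)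
        rw [this, mul_zero, mul_zero, eq_comm, ← finsum_zero (α := ℤ)]
        congr 1; ext u
        by_contra h2
        have := fsupp _ u h2
        omega
    · intro d hd
      by_contra h'
      apply hd
      rw [← finsum_zero (α := ℤ)]
      congr 1; ext u
      by_contra h2
      have := fsupp _ u h2
      rcases abs_cases k with h3 | h3 <;> omega
    · intro d hd
      have := B_supp (right_ne_zero_of_mul hd)
      rcases abs_cases k with h3 | h3 <;> omega
  rw [hL, hR, fs_swap _ (-(L + |k|)) (L + |k|), fs_swap f (-(L + |k|)) (L + |k|)]
  · congr 1; ext u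
    exact fs_shift (fun s => f s u) (u + k)
  · intro s u h
    have := fsupp _ u h
    rcases abs_cases k with h3 | h3 <;> omega
  · intro s u h
    have := fsupp _ u h
    rcases abs_cases k with h3 | h3 <;> omega

lemma rhs_eq (L : ℕ) :
    ∑ j ∈ Finset.Icc (-(L : ℤ)) (L : ℤ),
        (-1 : RatFunc ℚ) ^ j *
          (qq ^ (2 * j * (20 * j + 1)) * qBin (qq ^ 4) (2 * (L : ℤ)) ((L : ℤ) - 4 * j) +
            qq ^ (2 * (4 * j + 1) * (5 * j + 1)) *
              qBin (qq ^ 4) (2 * (L : ℤ)) ((L : ℤ) - 4 * j - 1)) =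
    ∑ s ∈ Finset.Icc (0 : ℤ) L, p ^ (s ^ 2) * B L s * R s := by
  have h1 : ∀ j : ℤ, (-1 : RatFunc ℚ) ^ j *
          (qq ^ (2 * j * (20 * j + 1)) * qBin (qq ^ 4) (2 * (L : ℤ)) ((L : ℤ) - 4 * j) +
            qq ^ (2 * (4 * j + 1) * (5 * j + 1)) *
              qBin (qq ^ 4) (2 * (L : ℤ)) ((L : ℤ) - 4 * j - 1)) =
      ∑ s ∈ Finset.Icc (0 : ℤ) L, p ^ (s ^ 2) * B L s * (c j * (T s (4 * j) + T s (4 * j + 1))) := by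
    intro j
    have a1 := T_to_B L (4 * j)
    have a2 := T_to_B L (4 * j + 1)
    have pq : ∀ n : ℤ, qq ^ (2 * n) = p ^ n := by
      intro n; unfold p; rw [zpow_mul]; norm_cast
    rw [mul_assoc 2, mul_assoc 2, pq, pq]
    change (-1 : RatFunc ℚ) ^ j * (_ * B _ _ + _ * B _ _) = _
    rw [show (L : ℤ) - 4 * j - 1 = L - (4 * j + 1) by ring,
      show j * (20 * j + 1) = j * (4 * j + 1) + (4 * j) ^ 2 by ring,
      show (4 * j + 1) * (5 * j + 1) = j * (4 * j + 1) + (4 * j + 1) ^ 2 by ring,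
      zpow_add₀ p_ne, zpow_add₀ p_ne, mul_assoc, mul_assoc, a1, a2, Finset.mul_sum, Finset.mul_sum,
      ← Finset.sum_add_distrib, Finset.mul_sum]
    apply Finset.sum_congr rfl
    intro s _
    unfold c
    ring
  rw [Finset.sum_congr rfl (fun j _ => h1 j), Finset.sum_comm]
  apply Finset.sum_congr rfl
  intro s hs
  rw [Finset.mem_Icc] at hs
  rw [R_eq s L hs.2, Finset.mul_sum]

lemma lhs_eq (L : ℕ) :
    ∑ n ∈ Finset.Icc (0 : ℤ) L, ∑ a ∈ Finset.Icc (0 : ℤ) L,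
      p ^ (n ^ 2 + a ^ 2) * B (L + a) (n + a) * B n a =
    ∑ s ∈ Finset.Icc (0 : ℤ) L, p ^ (s ^ 2) * B L s * G s := by
  have h1 : ∀ n ∈ Finset.Icc (0 : ℤ) L, ∀ a ∈ Finset.Icc (0 : ℤ) L,
      p ^ (n ^ 2 + a ^ 2) * B (L + a) (n + a) * B n a =
      ∑ s ∈ Finset.Icc (0 : ℤ) L, p ^ (s ^ 2) * B L s * g s a (s - n) := by
    intro n hn a ha
    rw [Finset.mem_Icc] at hn ha
    obtain ⟨m, rfl⟩ : ∃ m : ℕ, a = m := ⟨a.toNat, by omega⟩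
    have hv := vand m L (by omega) (n + m)
    rw [← fs_neg _ (n + m : ℤ), fs_eq _ 0 L] at hv
    · rw [add_comm (L : ℤ), hv, Finset.mul_sum, Finset.sum_mul]
      apply Finset.sum_congr rfl
      intro s _
      unfold g
      rw [show n + (m : ℤ) - (n + m - s) = s by ring, show n + (m : ℤ) - s = m - (s - n) by ring,
        B_symm, show s - (s - n) = n by ring, x_eq]
      have : p ^ (n ^ 2 + (m : ℤ) ^ 2) * p ^ (2 * ((m - (m - (s - n))) * s)) =
          p ^ (s ^ 2) * p ^ ((m : ℤ) ^ 2 + (s - n) ^ 2) := by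
        rw [← zpow_add₀ p_ne, ← zpow_add₀ p_ne]; congr 1; ring
      linear_combination (B m (s - n) * B L s * B n m) * this
    · intro s hs
      have := B_supp (right_ne_zero_of_mul hs)
      omega
  rw [Finset.sum_congr rfl (fun n hn => Finset.sum_congr rfl (fun a ha => h1 n hn a ha))]
  rw [Finset.sum_congr rfl (fun n _ => Finset.sum_comm), Finset.sum_comm]
  apply Finset.sum_congr rfl
  intro s hs
  rw [Finset.mem_Icc] at hs
  rw [Finset.sum_comm]
  unfold G
  rw [fs_eq _ 0 L, Finset.mul_sum]
  · apply Finset.sum_congr rfl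
    intro a _
    rw [← fs_neg _ s, fs_eq _ 0 L, Finset.mul_sum]
    intro n hn
    have := g_supp hn
    omega
  · intro a ha
    by_contra h'
    apply ha
    rw [← finsum_zero (α := ℤ)]
    congr 1; ext b
    by_contra h2
    have := g_supp h2
    omega

lemma reindex (L : ℕ) :
    ∑ m1 ∈ Finset.range (2 * L + 1), ∑ m2 ∈ Finset.range (2 * L + 1),
        (if Even (m1 + m2) then
          qq ^ (m1 ^ 2 + m2 ^ 2) *
            qBin (qq ^ 4) ((L : ℤ) + ((m1 : ℤ) - m2) / 2) (m1 : ℤ) *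
            qBin (qq ^ 4) (((m1 : ℤ) + m2) / 2) (m2 : ℤ)
        else 0) =
    ∑ n ∈ Finset.Icc (0 : ℤ) L, ∑ a ∈ Finset.Icc (0 : ℤ) L,
      p ^ (n ^ 2 + a ^ 2) * B (L + a) (n + a) * B n a := by
  rw [← Finset.sum_product', ← Finset.sum_product']
  have hsupp : ∀ m : ℕ × ℕ, (if Even (m.1 + m.2) then
          qq ^ (m.1 ^ 2 + m.2 ^ 2) *
            qBin (qq ^ 4) ((L : ℤ) + ((m.1 : ℤ) - m.2) / 2) (m.1 : ℤ) *
            qBin (qq ^ 4) (((m.1 : ℤ) + m.2) / 2) (m.2 : ℤ)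
        else 0) ≠ 0 → ∃ n a : ℕ, m = (n + a, n - a) ∧ a ≤ n ∧ n ≤ L := by
    rintro ⟨m1, m2⟩ h
    split_ifs at h with he
    · have h1 := B_supp (right_ne_zero_of_mul h)
      have h2 := B_supp (right_ne_zero_of_mul (left_ne_zero_of_mul h))
      obtain ⟨w, hw⟩ := he
      simp only at hw h1 h2
      exact ⟨w, m1 - w, by ext <;> simp only <;> omega, by omega, by omega⟩
    · exact absurd rfl h
  have hval : ∀ n a : ℕ, a ≤ n → (if Even (n + a + (n - a)) then
          qq ^ ((n + a) ^ 2 + (n - a) ^ 2) *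
            qBin (qq ^ 4) ((L : ℤ) + (((n + a : ℕ) : ℤ) - (n - a : ℕ)) / 2) ((n + a : ℕ) : ℤ) *
            qBin (qq ^ 4) ((((n + a : ℕ) : ℤ) + (n - a : ℕ)) / 2) ((n - a : ℕ) : ℤ)
        else 0) = p ^ ((n : ℤ) ^ 2 + (a : ℤ) ^ 2) * B (L + a) (n + a) * B n a := by
    intro n a h
    rw [if_pos ⟨n, by omega⟩]
    obtain ⟨d, rfl⟩ := Nat.exists_eq_add_of_le h
    rw [show a + d - a = d by omega, show (((a + d + a : ℕ) : ℤ) - (d : ℕ)) / 2 = a by omega,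
      show (((a + d + a : ℕ) : ℤ) + (d : ℕ)) / 2 = a + d by omega]
    change _ * B _ _ * B _ _ = _
    rw [← B_symm ((a + d : ℕ) : ℤ) a]
    push_cast
    rw [show (a : ℤ) + d - a = d by ring]
    congr 2
    unfold p
    rw [← zpow_natCast, ← zpow_natCast, ← zpow_mul]
    congr 1
    push_cast
    ring
  refine Finset.sum_bij_ne_zero
    (fun m _ _ => (((m.1 : ℤ) + m.2) / 2, ((m.1 : ℤ) - m.2) / 2)) ?_ ?_ ?_ ?_
  · intro m _ hm
    obtain ⟨n, a, rfl, h1, h2⟩ := hsupp m hm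
    simp only [Finset.mem_product, Finset.mem_Icc]
    omega
  · intro m _ hm m' _ hm' h
    obtain ⟨n, a, rfl, h1, h2⟩ := hsupp m hm
    obtain ⟨n', a', rfl, h1', h2'⟩ := hsupp m' hm'
    simp only [Prod.mk.injEq] at h ⊢
    omega
  · rintro ⟨n, a⟩ hna h
    simp only [Finset.mem_product, Finset.mem_Icc] at hna
    obtain ⟨n, rfl⟩ : ∃ m : ℕ, n = m := ⟨n.toNat, by omega⟩
    obtain ⟨a, rfl⟩ : ∃ m : ℕ, a = m := ⟨a.toNat, by omega⟩
    have h1 := B_supp (right_ne_zero_of_mul h)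
    refine ⟨(n + a, n - a), ?_, ?_, ?_⟩
    · simp only [Finset.mem_product, Finset.mem_range]; omega
    · rw [hval n a (by omega)]; exact h
    · simp only [Prod.mk.injEq]; omega
  · intro m _ hm
    obtain ⟨n, a, rfl, h1, h2⟩ := hsupp m hm
    simp only
    rw [hval n a h1, show (((n + a : ℕ) : ℤ) + (n - a : ℕ)) / 2 = n by omega,
      show (((n + a : ℕ) : ℤ) - (n - a : ℕ)) / 2 = a by omega]

end S13

theorem stmt13 (L : ℕ) :
    ∑ m1 ∈ Finset.range (2 * L + 1), ∑ m2 ∈ Finset.range (2 * L + 1),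
        (if Even (m1 + m2) then
          qq ^ (m1 ^ 2 + m2 ^ 2) *
            qBin (qq ^ 4) ((L : ℤ) + ((m1 : ℤ) - m2) / 2) (m1 : ℤ) *
            qBin (qq ^ 4) (((m1 : ℤ) + m2) / 2) (m2 : ℤ)
        else 0) =
      ∑ j ∈ Finset.Icc (-(L : ℤ)) (L : ℤ),
        (-1 : RatFunc ℚ) ^ j *
          (qq ^ (2 * j * (20 * j + 1)) * qBin (qq ^ 4) (2 * (L : ℤ)) ((L : ℤ) - 4 * j) +
            qq ^ (2 * (4 * j + 1) * (5 * j + 1)) *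
              qBin (qq ^ 4) (2 * (L : ℤ)) ((L : ℤ) - 4 * j - 1)) := by
  rw [S13.reindex, S13.lhs_eq, S13.rhs_eq]
  apply Finset.sum_congr rfl
  intro s hs
  rw [Finset.mem_Icc] at hs
  obtain ⟨m, rfl⟩ : ∃ m : ℕ, s = m := ⟨s.toNat, by omega⟩
  rw [(S13.G_eq_R m).1]
end
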